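/- Let L be a relational first-order language, let S be a countably infinite L-structure with carrier A, and suppose S is chainable by a linear order < on A which is either non-scattered or scattered of finite Hausdorff rank (i.e., for every relation symbol R of L there is a quantifier-free formula φ_R in the language of one binary relation symbol such that for all tuples ā from A, R^S(ā) holds iff (A,<) ⊨ φ_R(ā)). Then for every n ≥ 1 and every n-element substructure F of S, F has finite big Ramsey degree in S. -/

import Mathlib

/-!
The proof rests on the theorem of Carlson and Simpson for parameter words. A parameter word `W`
with infinitely many parameters acts on finite words over any alphabet by substitution (`act W`);
this action commutes with letter-to-letter maps, respects initial segments, and is closed under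
composition. A finite coloring of the parameter words with `n` parameters becomes constant on those
in the image of a suitable `act W` (`carlson_simpson`). The pigeonhole behind it, `pigeonhole`, is
proved with idempotent ultrafilters on free monoids: a minimal left ideal of `βM` yields
idempotents `e a` with `e a * e b = e a`, all of them images of a single idempotent of `βM'`, where
`M'` has an additional letter for the variable.

Call a chain `C` *codable* if its points are coded by tuples of ternary words and finitely many
labels such that every parameter word `W` induces a strictly increasing `f : C → C` whose values
are decoded from words in the image of `act W`. In a codable chain all `n`-tuples have finite big
Ramsey degree (`Codable.bigRamsey`): a tuple of words has an envelope, that is, a parameter word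
with a fixed number `N` of parameters from which the tuple is read off by one of finitely many
evaluations of the parameters; so a coloring of tuples gives a finite coloring of parameter words,
and the theorem of Carlson and Simpson bounds the number of colors left by the number of labels and
evaluations.

It remains to see that the chains in question are codable, a property which is invariant under
bi-embeddability.
* A countable non-scattered chain is bi-embeddable with `ℚ`, hence with the lexicographic order
  on ternary words, on which `act W` is strictly increasing.
* Codability passes to reversed chains, to finite sums, and to those `ω`-sums in which each of
  finitely many types of blocks that are present occurs infinitely often: the number of a block is
  coded by the length of an additional word. Such an `ω`-sum is determined, up to bi-embeddability,
  by the set of these types. Hence, by induction on the Hausdorff rank `n`, there is a finite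
  family of codable chains such that each chain of rank at most `n` is a finite sum of chains
  bi-embeddable with members of the family (`exists_family`).

Finally, in a structure chained by a linear order, strictly increasing self-maps are embeddings,
since they preserve and reflect quantifier-free formulas (`exists_embedding`).
-/

universe u v w x y

open FirstOrder

/-- The finite `L`-structure `A` has big Ramsey degree at most `t` in the `L`-structure `C`:
for every finite coloring of the set `Emb(A,C)` of `L`-embeddings of `A` into `C` there is an
`L`-embedding `w : C ↪[L] C` such that the colors of the compositions `w ∘ f`,
`f ∈ Emb(A,C)`, take at most `t` values. -/
def StructBigRamseyDegLE (L : FirstOrder.Language.{u, v}) (A : Type w) (C : Type x)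
    [L.Structure A] [L.Structure C] (t : ℕ) : Prop :=
  ∀ (k : ℕ) (χ : (A ↪[L] C) → Fin k), ∃ w : C ↪[L] C,
    (Set.range fun f : A ↪[L] C => χ (w.comp f)).ncard ≤ t

/-- A type with a (strict) order is a structure in the language of one binary relation symbol,
interpreting the symbol as `<`. -/
instance ltStructure (A : Type w) [LT A] : Language.order.Structure A where
  RelMap | .le => fun x => x 0 < x 1

/-- The `L`-structure `A` is chained by the linear order `<` on `A`: every relation of `A`
is definable in `(A, <)` by a quantifier-free formula in the language of one binary
relation symbol. -/
def ChainedBy (L : FirstOrder.Language.{u, v}) (A : Type w) [L.Structure A] [LinearOrder A] : Prop :=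
  ∀ (m : ℕ) (R : L.Relations m),
    ∃ φ : Language.order.Formula (Fin m),
      Language.BoundedFormula.IsQF φ ∧
      ∀ v : Fin m → A, Language.Structure.RelMap R v ↔ φ.Realize v

/-- A chain is scattered if ℚ does not order-embed into it. -/
def Scattered (C : Type w) [LinearOrder C] : Prop := IsEmpty (ℚ ↪o C)

/-- `InHausdorff n C` says that the chain `C` is order-isomorphic to a member of the level
`H_n` of the Hausdorff hierarchy: `H_0` consists of the empty and the one-element chain,
and `H_{n+1}` consists of the ℤ-indexed lexicographic sums `Σ_{i ∈ ℤ} S_i` with each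
`S_i ∈ ⋃_{m ≤ n} H_m`.  This is encoded via a monotone map `c : C → ℤ` whose fibers
(with the induced order) are order-isomorphic to members of lower levels of the hierarchy. -/
def InHausdorff : ℕ → (C : Type w) → [LinearOrder C] → Prop
  | 0, C, _ => Subsingleton C
  | n+1, C, _ => ∃ c : C → ℤ, Monotone c ∧
      ∀ i : ℤ, ∃ m : ℕ, ∃ _ : m ≤ n, InHausdorff m {x : C // c x = i}
  termination_by n => n
  decreasing_by omega

namespace ChainRamsey

open Filter

/-! ### A pigeonhole for left-variable words -/

section Pigeonhole

attribute [local instance] Ultrafilter.mul Ultrafilter.semigroup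

/-- A minimal closed left ideal of `βM`: its idempotents are right units on it. -/
lemma exists_minimal_left_ideal (M : Type*) [Semigroup M] [Nonempty M] :
    ∃ I : Set (Ultrafilter M), IsClosed I ∧ I.Nonempty ∧ (∀ x, ∀ y ∈ I, x * y ∈ I) ∧
      ∀ e ∈ I, ∀ f ∈ I, f * f = f → e * f = e := by
  let S : Set (Set (Ultrafilter M)) :=
    {I | IsClosed I ∧ I.Nonempty ∧ ∀ x, ∀ y ∈ I, x * y ∈ I}
  have huniv : (Set.univ : Set (Ultrafilter M)) ∈ S :=
    ⟨isClosed_univ, Set.univ_nonempty, fun _ _ _ => trivial⟩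
  obtain ⟨I, -, hI⟩ := zorn_superset_nonempty S (by
    intro c hc hchain hne
    refine ⟨⋂₀ c, ⟨isClosed_sInter fun s hs => (hc hs).1, ?_, ?_⟩, fun s hs =>
      Set.sInter_subset_of_mem hs⟩
    · have := hne.to_subtype
      refine IsCompact.nonempty_sInter_of_directed_nonempty_isCompact_isClosed
        (fun a ha b hb => ?_) (fun U hU => (hc hU).2.1)
        (fun U hU => (hc hU).1.isCompact) (fun U hU => (hc hU).1)
      rcases hchain.total ha hb with h | h
      exacts [⟨a, ha, subset_rfl, h⟩, ⟨b, hb, h, subset_rfl⟩]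
    · intro x y hy s hs
      exact (hc hs).2.2 x y (hy s hs)) _ huniv
  refine ⟨I, hI.prop.1, hI.prop.2.1, hI.prop.2.2, fun e he f hf hff => ?_⟩
  have hJ : (fun x => x * f) '' I ∈ S := by
    refine ⟨(hI.prop.1.isCompact.image (Ultrafilter.continuous_mul_left f)).isClosed,
      hI.prop.2.1.image _, ?_⟩
    rintro x _ ⟨y, hy, rfl⟩
    exact ⟨x * y, hI.prop.2.2 x y hy, mul_assoc _ _ _⟩
  have hle : (fun x => x * f) '' I ⊆ I := by
    rintro _ ⟨y, hy, rfl⟩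
    exact hI.prop.2.2 y f hf
  obtain ⟨x, -, rfl⟩ := hI.le_of_le hJ hle he
  change x * f * f = x * f
  rw [mul_assoc, hff]

lemma ultrafilter_map_mul {M N : Type*} [Semigroup M] [Semigroup N] (φ : M → N)
    (hφ : ∀ x y, φ (x * y) = φ x * φ y) (U V : Ultrafilter M) :
    Ultrafilter.map φ (U * V) = Ultrafilter.map φ U * Ultrafilter.map φ V :=
  Ultrafilter.coe_inj.mp <| Filter.ext' fun p => by
    simp only [Ultrafilter.eventually_mul, Ultrafilter.coe_map, Filter.eventually_map, hφ]

/-- The substitution of the letter `a` for the variable `none`. -/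
def subst {α : Type*} (a : α) (v : List (Option α)) : List α := v.map fun o => o.getD a

/-- An infinite Hales-Jewett theorem with left-variable words (the pigeonhole of the
Carlson-Simpson theorem): the words `w₀ v₀(a₀) ⋯ vᵢ₋₁(aᵢ₋₁)` form a monochromatic family, where
the variable word `vᵢ` is `none` followed by `v i`, and `F i` contains those with `i` blocks. -/
lemma pigeonhole {α : Type*} [Finite α] [Nonempty α] {κ : Type*} [Finite κ] (d : List α → κ) :
    ∃ (v : ℕ → List (Option α)) (F : ℕ → Set (List α)) (w₀ : List α) (col : κ), w₀ ∈ F 0 ∧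
      (∀ i, ∀ w ∈ F i, ∀ a, w ++ a :: subst a (v i) ∈ F (i + 1)) ∧
      ∀ i, ∀ w ∈ F i, d w = col := by
  classical
  obtain ⟨I, hIc, ⟨p, hp⟩, hIl, hIe⟩ := exists_minimal_left_ideal (FreeMonoid α)
  let φ : α → FreeMonoid (Option α) → FreeMonoid α := fun a => FreeMonoid.map fun o => o.getD a
  have hφ : ∀ a x y, φ a (x * y) = φ a x * φ a y := fun a x y => map_mul _ x y
  have hcont : ∀ a, Continuous (Ultrafilter.map (φ a)) := fun a =>
    ultrafilterBasis_is_basis.continuous_iff.2 <| Set.forall_mem_range.mpr fun s =>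
      ultrafilter_isOpen_basic (φ a ⁻¹' s)
  let X : Set (FreeMonoid (Option α)) := {w | ∃ v, w = FreeMonoid.of none * v}
  let Q : Set (Ultrafilter (FreeMonoid (Option α))) :=
    {q | (∀ a, Ultrafilter.map (φ a) q ∈ I) ∧ X ∈ q}
  have hQc : IsClosed Q := by
    have : Q = (⋂ a, Ultrafilter.map (φ a) ⁻¹' I) ∩ {q | X ∈ q} := by
      ext q; simp [Q]
    rw [this]
    exact (isClosed_iInter fun a => hIc.preimage (hcont a)).inter (ultrafilter_isClosed_basic X)
  have hQne : Q.Nonempty := by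
    refine ⟨pure (FreeMonoid.of none) * Ultrafilter.map (FreeMonoid.map some) p, fun a => ?_, ?_⟩
    · rw [ultrafilter_map_mul _ (hφ a)]
      have : Ultrafilter.map (φ a) (Ultrafilter.map (FreeMonoid.map some) p) = p := by
        rw [Ultrafilter.map_map]
        have : φ a ∘ FreeMonoid.map some = id := by
          funext w
          change (w.toList.map some).map (fun o => o.getD a) = w.toList
          simp
        rw [this, Ultrafilter.map_id]
      rw [this]
      exact hIl _ _ hp
    · change ∀ᶠ w in ((_ * _ : Ultrafilter (FreeMonoid (Option α))) : Filter _), w ∈ X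
      rw [Ultrafilter.eventually_mul]
      change ∀ᶠ m' in _, _ ∈ X
      exact Eventually.of_forall fun v => ⟨FreeMonoid.map some v, rfl⟩
  have hQm : ∀ x ∈ Q, ∀ y ∈ Q, x * y ∈ Q := by
    rintro x ⟨hx, hxX⟩ y ⟨hy, -⟩
    refine ⟨fun a => ?_, ?_⟩
    · rw [ultrafilter_map_mul _ (hφ a)]
      exact hIl _ _ (hy a)
    · change ∀ᶠ w in ((_ * _ : Ultrafilter (FreeMonoid (Option α))) : Filter _), w ∈ X
      rw [Ultrafilter.eventually_mul]
      filter_upwards [hxX] with w hw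
      obtain ⟨v, rfl⟩ := hw
      exact Eventually.of_forall fun v' => ⟨v * v', mul_assoc _ _ _⟩
  obtain ⟨q, ⟨hqI, hqX⟩, hqq⟩ := exists_idempotent_in_compact_subsemigroup
    (fun V => Ultrafilter.continuous_mul_left V) Q hQne hQc.isCompact hQm
  set e : α → Ultrafilter (FreeMonoid α) := fun a => Ultrafilter.map (φ a) q with he
  have hee : ∀ a b, e a * e b = e a := fun a b =>
    hIe _ (hqI a) _ (hqI b) (by rw [← ultrafilter_map_mul _ (hφ b), hqq])
  -- the color class of a typical word
  obtain ⟨a₀⟩ := ‹Nonempty α›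
  obtain ⟨col, hcol⟩ : ∃ col, {w : FreeMonoid α | d w.toList = col} ∈ e a₀ := by
    have h : (⋃ col ∈ (Set.univ : Set κ), {w : FreeMonoid α | d w.toList = col}) ∈ e a₀ := by
      have : (⋃ col ∈ (Set.univ : Set κ), {w : FreeMonoid α | d w.toList = col}) = Set.univ := by
        ext w; simp
      rw [this]
      exact Filter.univ_mem
    obtain ⟨c, -, hc⟩ := (Ultrafilter.finite_biUnion_mem_iff Set.finite_univ).1 h
    exact ⟨c, hc⟩
  let A : Set (FreeMonoid α) := {w | d w.toList = col}
  let B : Set (FreeMonoid α) := {w | w ∈ A ∧ ∀ a, ∀ᶠ v in (e a : Filter _), w * v ∈ A}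
  have hBe : B ∈ e a₀ := by
    refine inter_mem hcol ?_
    change ∀ᶠ w in (e a₀ : Filter _), ∀ a, ∀ᶠ v in (e a : Filter _), w * v ∈ A
    rw [eventually_all]
    intro a
    rw [← Ultrafilter.eventually_mul, hee]
    exact hcol
  have hBstep : ∀ w ∈ B, ∀ a, ∀ᶠ v in (e a : Filter _), w * v ∈ B := by
    rintro w ⟨-, hw⟩ a
    refine (hw a).and ?_
    rw [eventually_all]
    intro b
    simp only [mul_assoc]
    rw [← Ultrafilter.eventually_mul (e a) (e b) fun v => w * v ∈ A, hee]
    exact hw a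
  have hBq : ∀ E : Finset (List α), (∀ w ∈ E, FreeMonoid.ofList w ∈ B) →
      ∃ v : List (Option α), ∀ w ∈ E, ∀ a, FreeMonoid.ofList (w ++ a :: subst a v) ∈ B := by
    intro E hE
    have h1 : ∀ᶠ v in (q : Filter _), ∀ w ∈ E, ∀ a, FreeMonoid.ofList w * φ a v ∈ B := by
      rw [Finset.eventually_all]
      intro w hw
      rw [eventually_all]
      exact fun a => hBstep _ (hE w hw) a
    obtain ⟨_, h2, v, rfl⟩ := (h1.and hqX).exists
    exact ⟨v.toList, h2⟩
  -- the finite sets of words built so far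
  have := Fintype.ofFinite α
  obtain ⟨w₀, hw₀⟩ : ∃ w₀ : List α, FreeMonoid.ofList w₀ ∈ B := by
    obtain ⟨w, hw⟩ := (e a₀).nonempty_of_mem hBe
    exact ⟨w.toList, hw⟩
  let St := {E : Finset (List α) // ∀ w ∈ E, FreeMonoid.ofList w ∈ B}
  choose nv hnv using fun E : St => hBq E.1 E.2
  let next : St → St := fun E =>
    ⟨(E.1 ×ˢ (Finset.univ : Finset α)).image fun x => x.1 ++ x.2 :: subst x.2 (nv E), by
      intro w hw
      simp only [Finset.mem_image, Finset.mem_product, Finset.mem_univ, and_true] at hw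
      obtain ⟨x, hx, rfl⟩ := hw
      exact hnv E _ hx _⟩
  let E₀ : St := ⟨{w₀}, by simpa using hw₀⟩
  let E : ℕ → St := fun i => next^[i] E₀
  refine ⟨fun i => nv (E i), fun i => ↑(E i).1, w₀, col, by simp [E, E₀], ?_, ?_⟩
  · intro i w hw a
    have : E (i + 1) = next (E i) := Function.iterate_succ_apply' _ _ _
    simp only [this, next, Finset.mem_coe, Finset.mem_image, Finset.mem_product, Finset.mem_univ,
      and_true]
    exact ⟨(w, a), hw, rfl⟩
  · intro i w hw
    exact ((E i).2 w hw).1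

end Pigeonhole

/-! ### Parameter words and their action -/

/-- A parameter word `W = (W 0, W 1, …)` with infinitely many parameters acts on finite words by
substitution: the `k`-th letter of `l` is followed by the block of letters of `l` whose positions
are listed in `W k`. Only positions `≤ k` are looked up, so that the action is compatible with
initial segments. In the usual notation the parameter word is
`λ₀ λ_{W 0} λ₁ λ_{W 1} ⋯`, and `l` is substituted in it up to the parameter of index `|l|`. -/
def act (W : ℕ → List ℕ) {α : Type*} (l : List α) : List α :=
  (List.range l.length).flatMap fun k => (k :: W k).filterMap fun i => (l.take (k + 1))[i]?

@[simp] lemma act_nil (W : ℕ → List ℕ) {α : Type*} : act W ([] : List α) = [] := rfl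

lemma act_snoc (W : ℕ → List ℕ) {α : Type*} (l : List α) (c : α) :
    act W (l ++ [c]) = act W l ++ c :: (W l.length).filterMap fun i => (l ++ [c])[i]? := by
  unfold act
  rw [List.length_append, List.length_singleton, List.range_succ, List.flatMap_append]
  congr 1
  · refine List.flatMap_congr fun k hk => ?_
    rw [List.mem_range] at hk
    rw [List.take_append_of_le_length (by omega)]
  · simp [List.take_of_length_le]

lemma act_map (W : ℕ → List ℕ) {α β : Type*} (f : α → β) (l : List α) :
    act W (l.map f) = (act W l).map f := by
  unfold act
  rw [List.map_flatMap, List.length_map]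
  congr 1
  funext k
  rw [List.map_filterMap]
  congr 1
  funext i
  rw [← List.map_take, List.getElem?_map]

lemma act_mem (W : ℕ → List ℕ) {α : Type*} {l : List α} {a : α} (h : a ∈ act W l) : a ∈ l := by
  simp only [act, List.mem_flatMap, List.mem_filterMap] at h
  obtain ⟨k, -, i, -, hi⟩ := h
  exact List.mem_of_mem_take (List.mem_of_getElem? hi)

/-- The action respects initial segments and the letter at which two words part. -/
lemma act_append_cons (W : ℕ → List ℕ) {α : Type*} (s : List α) (c : α) (r : List α) :
    ∃ e, act W (s ++ c :: r) = act W s ++ c :: e := by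
  induction r using List.reverseRecOn with
  | nil => exact ⟨_, act_snoc W s c⟩
  | append_singleton r d ih =>
    obtain ⟨e, he⟩ := ih
    have := act_snoc W (s ++ c :: r) d
    rw [he] at this
    exact ⟨_, by simpa using this⟩

lemma act_trivial {W : ℕ → List ℕ} {α : Type*} (l : List α) (h : ∀ k < l.length, W k = []) :
    act W l = l := by
  induction l using List.reverseRecOn with
  | nil => rfl
  | append_singleton l c ih =>
    simp only [List.length_append, List.length_singleton] at h
    rw [act_snoc, ih fun k hk => h k (by omega), h _ (by omega)]
    rfl

lemma map_getElem_range {α : Type*} (l : List α) :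
    (List.range l.length).map (fun i => l[i]?) = l.map some := by
  apply List.ext_getElem?
  intro i
  by_cases h : i < l.length
  · simp [h]
  · simp [h]

lemma act_filterMap_range (W V : ℕ → List ℕ) {α : Type*} (l : List α) (m : ℕ)
    (hm : m ≤ l.length) :
    act W (act V (l.take m)) = (act W (act V (List.range m))).filterMap fun i => l[i]? := by
  have key : (act W (act V (List.range m))).map (fun i => l[i]?) =
      (act W (act V (l.take m))).map some := by
    rw [← act_map, ← act_map, ← act_map, ← act_map]
    congr 2
    have := map_getElem_range (l.take m)
    rw [← this, List.length_take, min_eq_left hm]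
    refine List.map_congr_left fun i hi => ?_
    rw [List.getElem?_take_of_lt (List.mem_range.1 hi)]
  have := congrArg (List.filterMap id) key
  simpa [List.filterMap_map] using this.symm

/-- The action is closed under composition. -/
lemma exists_comp (W V : ℕ → List ℕ) :
    ∃ Z : ℕ → List ℕ, ∀ {α : Type*} (l : List α), act Z l = act W (act V l) := by
  have h1 : ∀ k, ∃ e, act W (act V (List.range (k + 1))) =
      act W (act V (List.range k)) ++ k :: e := by
    intro k
    rw [List.range_succ]
    obtain ⟨e, he⟩ := act_append_cons V (List.range k) k []
    rw [he]
    exact act_append_cons W _ _ _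
  choose Z hZ using h1
  refine ⟨Z, fun l => ?_⟩
  induction l using List.reverseRecOn with
  | nil => rfl
  | append_singleton l c ih =>
    rw [act_snoc, ih]
    have h2 := act_filterMap_range W V (l ++ [c]) (l.length + 1) (by simp)
    have h3 := act_filterMap_range W V (l ++ [c]) l.length (by simp)
    rw [hZ, List.filterMap_append, ← h3] at h2
    rw [List.take_of_length_le (by simp), List.take_left'  rfl] at h2
    rw [h2]
    simp

/-- The words over `{0, …, n - 1}` in which all letters occur, in the order of their first
occurrences `0, 1, …, n - 1`: the finite parameter words with `n` parameters. -/
inductive Rig : ℕ → List ℕ → Prop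
  | nil : Rig 0 []
  | new {n : ℕ} {l : List ℕ} : Rig n l → Rig (n + 1) (l ++ [n])
  | old {n : ℕ} {l : List ℕ} {a : ℕ} : Rig n l → a < n → Rig n (l ++ [a])

lemma Rig.append {n : ℕ} {l : List ℕ} (h : Rig n l) (s : List ℕ) (hs : ∀ a ∈ s, a < n) :
    Rig n (l ++ s) := by
  induction s using List.reverseRecOn with
  | nil => simpa using h
  | append_singleton s c ih =>
    rw [← List.append_assoc]
    exact (ih fun a ha => hs a (by simp [ha])).old (hs c (by simp))

lemma Rig.mem_iff {n : ℕ} {l : List ℕ} (h : Rig n l) (a : ℕ) : a ∈ l ↔ a < n := by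
  induction h with
  | nil => simp
  | new h ih => simp [ih]; omega
  | old h ha ih =>
    simp only [List.mem_append, ih, List.mem_singleton, or_iff_left_iff_imp]
    rintro rfl; exact ha

lemma Rig.act {n : ℕ} {l : List ℕ} (h : Rig n l) (W : ℕ → List ℕ) : Rig n (act W l) := by
  induction h with
  | nil => exact Rig.nil
  | new h ih =>
    rw [act_snoc, List.append_cons]
    refine ih.new.append _ fun a ha => ?_
    rw [List.mem_filterMap] at ha
    obtain ⟨i, -, hi⟩ := ha
    exact (h.new.mem_iff a).1 (List.mem_of_getElem? hi)
  | old h hb ih =>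
    rw [act_snoc, List.append_cons]
    refine (ih.old hb).append _ fun a ha => ?_
    rw [List.mem_filterMap] at ha
    obtain ⟨i, -, hi⟩ := ha
    exact ((h.old hb).mem_iff a).1 (List.mem_of_getElem? hi)

lemma Rig.split {n : ℕ} {l : List ℕ} (h : Rig (n + 1) l) :
    ∃ p s, Rig n p ∧ (∀ a ∈ s, a ≤ n) ∧ l = p ++ n :: s := by
  generalize hm : n + 1 = m at h
  induction h with
  | nil => omega
  | @new m' l h ih =>
    obtain rfl : n = m' := by omega
    exact ⟨_, [], h, by simp, rfl⟩
  | @old m' l a h ha ih =>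
    obtain ⟨p, s, hp, hs, rfl⟩ := ih hm
    refine ⟨p, s ++ [a], hp, fun b hb => ?_, by simp⟩
    rcases List.mem_append.1 hb with hb | hb
    · exact hs b hb
    · rw [List.mem_singleton] at hb; omega

/-! ### The Carlson-Simpson theorem -/

/-- One step of the fusion: above a prefix `p` followed by the first occurrence of a new letter
`n`, the color can be made independent of the rest of the word, for all `p` of length `m` at once,
by a parameter word that leaves words of length `≤ m` alone. -/
lemma fusion_step {κ : Type*} [Finite κ] (n m : ℕ) (c : List ℕ → κ) :
    ∃ V : ℕ → List ℕ, (∀ k < m, V k = []) ∧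
      ∀ p, p.length = m → Rig n p → ∀ s : List ℕ, (∀ a ∈ s, a ≤ n) →
        c (act V (p ++ n :: s)) = c (act V (p ++ [n])) := by
  classical
  -- The alphabet consists of the positions `0, …, m`; a word over it is read through each of the
  -- finitely many words `q = p n` of length `m + 1` to produce a word over `{0, …, n}`.
  let rd : (Fin (m + 1) → Fin (n + 1)) → Fin (m + 1) → ℕ := fun q i => (q i : ℕ)
  obtain ⟨v, F, w₀, col, hw₀, hF, hcol⟩ := pigeonhole (α := Fin (m + 1))
    (fun w => fun q : Fin (m + 1) → Fin (n + 1) => c (List.ofFn (rd q) ++ w.map (rd q)))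
  let V : ℕ → List ℕ := fun k =>
    if k < m then [] else if k = m then w₀.map Fin.val
    else (v (k - (m + 1))).map fun o => o.elim k Fin.val
  have hVlt : ∀ k < m, V k = [] := fun k hk => by simp [V, hk]
  refine ⟨V, hVlt, fun p hp hpR s hs => ?_⟩
  have hle : ∀ a ∈ p ++ [n], a < n + 1 := by
    intro a ha
    rcases List.mem_append.1 ha with ha | ha
    · have := (hpR.mem_iff a).1 ha; omega
    · rw [List.mem_singleton] at ha; omega
  have hlen : (p ++ [n]).length = m + 1 := by simp [hp]
  obtain ⟨q, hq⟩ : ∃ q : Fin (m + 1) → Fin (n + 1), List.ofFn (rd q) = p ++ [n] := by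
    refine ⟨fun i => ⟨(p ++ [n])[i]'(by rw [hlen]; exact i.2), hle _ (List.getElem_mem _)⟩, ?_⟩
    apply List.ext_getElem
    · simp [hp]
    · intro i h1 h2
      rw [List.getElem_ofFn]
      rfl
  have hget : ∀ a : Fin (m + 1), ∀ r : List ℕ, ((p ++ [n]) ++ r)[(a : ℕ)]? = some (rd q a) := by
    intro a r
    rw [← hq, List.getElem?_append_left (by rw [List.length_ofFn]; exact a.2), List.getElem?_ofFn]
    simp [a.2]
  have hsurj : ∀ b ≤ n, ∃ a : Fin (m + 1), rd q a = b := by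
    intro b hb
    have : b ∈ List.ofFn (rd q) := by
      rw [hq, List.mem_append, hpR.mem_iff, List.mem_singleton]; omega
    exact List.mem_ofFn.1 this
  have key : ∀ s : List ℕ, (∀ a ∈ s, a ≤ n) →
      ∃ w ∈ F s.length, act V ((p ++ [n]) ++ s) = (p ++ [n]) ++ w.map (rd q) := by
    intro s hs
    induction s using List.reverseRecOn with
    | nil =>
      refine ⟨w₀, hw₀, ?_⟩
      rw [List.append_nil, act_snoc, act_trivial p fun k hk => hVlt k (hp ▸ hk), hp]
      have : V m = w₀.map Fin.val := by simp [V]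
      rw [this, List.filterMap_map, List.append_assoc, List.singleton_append]
      congr 2
      rw [← List.filterMap_eq_map]
      congr 1
      funext a
      simpa using hget a []
    | append_singleton s b ih =>
      obtain ⟨w, hw, hwe⟩ := ih fun a ha => hs a (by simp [ha])
      obtain ⟨a, ha⟩ := hsurj b (hs b (by simp))
      refine ⟨w ++ a :: subst a (v s.length), by simpa using hF _ w hw a, ?_⟩
      have hl : ((p ++ [n]) ++ s).length = m + 1 + s.length := by
        rw [List.length_append, hlen]
      have hV : V (m + 1 + s.length) = (v s.length).map
          fun o => o.elim (m + 1 + s.length) Fin.val := by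
        have h1 : ¬ m + 1 + s.length < m := by omega
        have h2 : ¬ m + 1 + s.length = m := by omega
        simp only [V, h1, h2, if_false, Nat.add_sub_cancel_left]
      rw [← List.append_assoc, act_snoc, hwe, hl, hV, List.map_append, List.map_cons, ha,
        List.append_assoc (p ++ [n])]
      congr 3
      rw [subst, List.map_map, List.filterMap_map, ← List.filterMap_eq_map]
      congr 1
      funext o
      cases o with
      | none =>
        simp only [Function.comp, Option.elim_none, Option.getD_none, ha]
        rw [← hl]
        simp
      | some a' =>
        simp only [Function.comp, Option.elim_some, Option.getD_some]
        rw [List.append_assoc, hget]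
  have hfin : ∀ s : List ℕ, (∀ a ∈ s, a ≤ n) → c (act V (p ++ n :: s)) = col q := by
    intro s hs
    obtain ⟨w, hw, hwe⟩ := key s hs
    rw [List.append_cons, hwe, ← hq]
    exact congrFun (hcol _ w hw) q
  rw [hfin s hs, hfin [] (by simp)]

/-- The Carlson-Simpson theorem for parameter words with `n` parameters (and no constants): some
infinite parameter word `W` has the property that all parameter words obtained from it by
substituting a parameter word with `n` parameters have the same color. -/
theorem carlson_simpson (n : ℕ) : ∀ {κ : Type} [Finite κ] (c : List ℕ → κ),
    ∃ (W : ℕ → List ℕ) (col : κ), ∀ l, Rig n l → c (act W l) = col := by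
  induction n with
  | zero =>
    intro κ _ c
    refine ⟨fun _ => [], c [], fun l hl => ?_⟩
    cases hl with
    | nil => rfl
    | old h ha => omega
  | succ n ih =>
    intro κ _ c
    choose V hVt hVc using fun (m : ℕ) (W : ℕ → List ℕ) =>
      fusion_step n m fun l => c (act W l)
    choose cmp hcmp using fun W V : ℕ → List ℕ => exists_comp.{0} W V
    let Ws : ℕ → ℕ → List ℕ := fun m =>
      Nat.rec (fun _ => []) (fun m W => cmp W (V m W)) m
    have hWs : ∀ m (l : List ℕ), act (Ws (m + 1)) l = act (Ws m) (act (V m (Ws m)) l) :=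
      fun m l => hcmp _ _ l
    -- `Ws (m + 1)` agrees with `Ws m` on words of length `≤ m`, so there is a limit `W∞`
    let Wi : ℕ → List ℕ := fun k => Ws (k + 1) k
    have hstab : ∀ m (l : List ℕ), l.length ≤ m → ∀ d, act (Ws (m + d)) l = act (Ws m) l := by
      intro m l hl d
      induction d with
      | zero => rfl
      | succ d ihd =>
        rw [← add_assoc, hWs, act_trivial l fun k hk => hVt _ _ _ (by omega), ihd]
    have hlim : ∀ l : List ℕ, act Wi l = act (Ws l.length) l := by
      intro l
      induction l using List.reverseRecOn with
      | nil => rfl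
      | append_singleton l a ihl =>
        rw [act_snoc, ihl, List.length_append, List.length_singleton, act_snoc,
          hstab l.length l le_rfl 1]
    have hind : ∀ p, Rig n p → ∀ s : List ℕ, (∀ a ∈ s, a ≤ n) →
        c (act Wi (p ++ n :: s)) = c (act Wi (p ++ [n])) := by
      intro p hp
      have h1 : ∀ d, ∀ s : List ℕ, (∀ a ∈ s, a ≤ n) →
          c (act (Ws (p.length + 1 + d)) (p ++ n :: s)) =
            c (act (Ws (p.length + 1)) (p ++ [n])) := by
        intro d
        induction d with
        | zero =>
          intro s hs
          rw [add_zero, hWs, hWs]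
          exact hVc p.length (Ws p.length) p rfl hp s hs
        | succ d ihd =>
          intro s hs
          set X := V (p.length + 1 + d) (Ws (p.length + 1 + d)) with hX
          obtain ⟨e, he⟩ := act_append_cons X p n s
          rw [← add_assoc, hWs, ← hX, he,
            act_trivial p fun k hk => hVt _ _ _ (by omega)]
          refine ihd e fun a ha => ?_
          have h2 : a ∈ act X (p ++ n :: s) := by rw [he]; simp [ha]
          have h3 := act_mem X h2
          simp only [List.mem_append, List.mem_cons, hp.mem_iff] at h3
          rcases h3 with h3 | h3 | h3
          · omega
          · omega
          · exact hs a h3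
      intro s hs
      rw [hlim, hlim]
      have h2 := h1 s.length s hs
      have h3 : (p ++ n :: s).length = p.length + 1 + s.length := by
        simp; omega
      rw [h3, h2]
      congr 2
      simp
    obtain ⟨W', col, hW'⟩ := ih fun p => c (act Wi (p ++ [n]))
    refine ⟨cmp Wi W', col, fun l hl => ?_⟩
    obtain ⟨p, s, hp, hs, rfl⟩ := hl.split
    obtain ⟨e, he⟩ := act_append_cons W' p n s
    rw [hcmp, ← hW' p hp, he]
    refine hind _ (hp.act W') e fun a ha => ?_
    have h2 : a ∈ act W' (p ++ n :: s) := by rw [he]; simp [ha]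
    have h3 := act_mem W' h2
    simp only [List.mem_append, List.mem_cons, hp.mem_iff] at h3
    rcases h3 with h3 | h3 | h3
    · omega
    · omega
    · exact hs a h3

/-! ### Envelopes -/

/-- Read a word over `Option α` up to the first blank `none`. -/
def deco {α : Type*} : List (Option α) → List α
  | [] => []
  | none :: _ => []
  | some a :: l => a :: deco l

lemma deco_some {α : Type*} (s : List α) : deco (s.map some) = s := by
  induction s with
  | nil => rfl
  | cons a s ih => simp [deco, ih]

lemma deco_none {α : Type*} (s : List α) (e : List (Option α)) :
    deco (s.map some ++ none :: e) = s := by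
  induction s with
  | nil => rfl
  | cons a s ih => simpa [deco] using ih

lemma deco_cases {α : Type*} (l : List (Option α)) :
    ∃ s : List α, l = s.map some ∨ ∃ r, l = s.map some ++ none :: r := by
  induction l with
  | nil => exact ⟨[], Or.inl rfl⟩
  | cons a l ih =>
    cases a with
    | none => exact ⟨[], Or.inr ⟨l, rfl⟩⟩
    | some a =>
      obtain ⟨s, rfl | ⟨r, rfl⟩⟩ := ih
      · exact ⟨a :: s, Or.inl rfl⟩
      · exact ⟨a :: s, Or.inr ⟨r, rfl⟩⟩

lemma act_deco (W : ℕ → List ℕ) {α : Type*} (l : List (Option α)) :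
    deco (act W l) = act W (deco l) := by
  obtain ⟨s, rfl | ⟨r, rfl⟩⟩ := deco_cases l
  · rw [deco_some, act_map, deco_some]
  · obtain ⟨e, he⟩ := act_append_cons W (s.map some) none r
    rw [he, deco_none, act_map, deco_none]

/-- Every word is obtained by renaming letters injectively in a rigid word. -/
lemma exists_rig {K : Type*} (cols : List K) :
    ∃ (n : ℕ) (U : List ℕ) (A : List K), A.Nodup ∧ A.length = n ∧ Rig n U ∧
      U.map (fun a => A[a]?) = cols.map some := by
  classical
  induction cols using List.reverseRecOn with
  | nil => exact ⟨0, [], [], List.nodup_nil, rfl, Rig.nil, rfl⟩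
  | append_singleton cols c ih =>
    obtain ⟨n, U, A, hA, hn, hU, hm⟩ := ih
    by_cases hc : c ∈ A
    · obtain ⟨i, hi, rfl⟩ := List.getElem_of_mem hc
      exact ⟨n, U ++ [i], A, hA, hn, hU.old (hn ▸ hi), by simp [hm, hi]⟩
    · refine ⟨n + 1, U ++ [n], A ++ [c], ?_, by simp [hn], hU.new, ?_⟩
      · rw [List.nodup_append]
        exact ⟨hA, List.nodup_singleton c, fun a ha b hb => by
          rw [List.mem_singleton] at hb; rintro rfl; exact hc (hb ▸ ha)⟩
      · rw [List.map_append, List.map_append, ← hm]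
        congr 1
        · refine List.map_congr_left fun a ha => ?_
          rw [List.getElem?_append_left (hn ▸ (hU.mem_iff a).1 ha)]
        · simp [← hn]

lemma Rig.pad {n m : ℕ} {U : List ℕ} (h : Rig n U) (hnm : n ≤ m) :
    ∃ r, Rig m (U ++ r) := by
  induction m, hnm using Nat.le_induction with
  | base => exact ⟨[], by simpa using h⟩
  | succ m _ ih =>
    obtain ⟨r, hr⟩ := ih
    exact ⟨r ++ [m], by simpa using hr.new⟩

/-- A finite family of words has an envelope: a rigid word with a fixed number of parameters, from
which all of them are read off by evaluating the parameters and cutting at the first blank. -/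
lemma exists_envelope {J α : Type} [Finite J] [Finite α] (s : J → List α) :
    ∃ U, Rig (Nat.card (J → Option α)) U ∧ ∃ A : ℕ → J → Option α,
      ∀ j, deco (U.map fun a => A a j) = s j := by
  classical
  have := Fintype.ofFinite J
  have := Fintype.ofFinite α
  obtain ⟨L, hL⟩ : ∃ L, ∀ j, (s j).length < L :=
    ⟨(∑ j, (s j).length) + 1, fun j => Nat.lt_succ_of_le
      (Finset.single_le_sum (f := fun j => (s j).length) (fun _ _ => Nat.zero_le _)
        (Finset.mem_univ j))⟩
  obtain ⟨n, U, A, hA, hn, hU, hm⟩ :=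
    exists_rig ((List.range L).map fun x => fun j => (s j)[x]?)
  have hle : n ≤ Nat.card (J → Option α) := by
    rw [Nat.card_eq_fintype_card, ← hn]
    exact hA.length_le_card
  obtain ⟨r, hr⟩ := hU.pad hle
  refine ⟨U ++ r, hr, fun a j => A[a]?.bind fun f => f j, fun j => ?_⟩
  have h1 : U.map (fun a => A[a]?.bind fun f => f j) = (List.range L).map fun x => (s j)[x]? := by
    have := congrArg (List.map fun o : Option (J → Option α) => o.bind fun f => f j) hm
    simpa [Function.comp_def] using this
  rw [List.map_append, h1]
  have h2 : (List.range L).map (fun x => (s j)[x]?) =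
      (s j).map some ++ none :: List.replicate (L - (s j).length - 1) none := by
    apply List.ext_getElem?
    intro i
    rcases lt_trichotomy i (s j).length with h | h | h
    · rw [List.getElem?_append_left (by simpa using h)]
      simp [h, h.trans (hL j)]
    · subst h
      rw [List.getElem?_append_right (by simp)]
      simp [hL j]
    · rw [List.getElem?_append_right (by simpa using h.le)]
      obtain ⟨d, rfl⟩ := Nat.exists_eq_add_of_lt h
      simp only [List.length_map]
      rw [show (s j).length + d + 1 - (s j).length = d + 1 by omega, List.getElem?_cons_succ,
        List.getElem?_replicate]
      by_cases h3 : (s j).length + d + 1 < L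
      · rw [if_pos (by omega)]; simp [h3]; omega
      · rw [if_neg (by omega)]; simp; omega
  rw [h2, List.append_assoc, List.cons_append, deco_none]

/-! ### Codable chains -/

/-- A chain is codable if its points are coded by finitely many ternary words together with a
label from a finite set, in such a way that each parameter word `W` acts on the chain: some strictly
increasing self-map `f` takes every point `x` to a point whose codes are obtained by letting `W` act
on certain words that depend on `x` only. -/
def Codable (C : Type w) [LinearOrder C] : Prop :=
  ∃ (Λ ι : Type) (_ : Finite Λ) (_ : Finite ι) (dec : Λ → (ι → List (Fin 3)) → C),
    ∀ W : ℕ → List ℕ, ∃ f : C → C, StrictMono f ∧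
      ∀ x, ∃ (lam : Λ) (s : ι → List (Fin 3)), f x = dec lam fun j => act W (s j)

/-- In a codable chain all `n`-tuples have finite big Ramsey degrees, simultaneously. -/
theorem Codable.bigRamsey {C : Type w} [LinearOrder C] (hC : Codable C) (n : ℕ) :
    ∃ t : ℕ, ∀ (k : ℕ) (χ : (Fin n → C) → Fin k), ∃ f : C → C, StrictMono f ∧
      (Set.range fun v : Fin n → C => χ (f ∘ v)).ncard ≤ t := by
  obtain ⟨Λ, ι, _, _, dec, hdec⟩ := hC
  let J := Fin n × ι
  let K := J → Option (Fin 3)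
  let N := Nat.card K
  refine ⟨Nat.card ((Fin n → Λ) × (Fin N → K)), fun k χ => ?_⟩
  let c : List ℕ → (Fin n → Λ) × (Fin N → K) → Fin k := fun U p =>
    χ fun i => dec (p.1 i) fun j => deco (U.map fun a =>
      if h : a < N then p.2 ⟨a, h⟩ (i, j) else none)
  obtain ⟨W, col, hW⟩ := carlson_simpson N c
  obtain ⟨f, hf, hfx⟩ := hdec W
  refine ⟨f, hf, ?_⟩
  have hsub : (Set.range fun v : Fin n → C => χ (f ∘ v)) ⊆ Set.range col := by
    rintro _ ⟨v, rfl⟩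
    choose lam s hs using hfx
    obtain ⟨U, hU, A, hA⟩ := exists_envelope fun j : J => s (v j.1) j.2
    refine ⟨(fun i => lam (v i), fun a => A a), ?_⟩
    rw [← hW U hU]
    simp only [c]
    congr 1
    funext i
    rw [Function.comp_apply, hs]
    congr 1
    funext j
    rw [← act_map, act_deco, ← hA (i, j)]
    congr 2
    refine List.map_congr_left fun a ha => ?_
    rw [dif_pos ((hU.mem_iff a).1 ha)]
  refine (Set.ncard_le_ncard hsub (Set.toFinite _)).trans ?_
  rw [← Set.image_univ, ← Set.ncard_univ]
  exact Set.ncard_image_le (Set.toFinite _)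

/-! ### Bi-embeddability -/

/-- The chains `C` and `D` embed in each other. -/
def Bi (C : Type w) [LinearOrder C] (D : Type x) [LinearOrder D] : Prop :=
  (∃ f : C → D, StrictMono f) ∧ ∃ g : D → C, StrictMono g

lemma Bi.refl (C : Type w) [LinearOrder C] : Bi C C := ⟨⟨id, strictMono_id⟩, id, strictMono_id⟩

lemma Bi.symm {C : Type w} [LinearOrder C] {D : Type x} [LinearOrder D] (h : Bi C D) : Bi D C :=
  ⟨h.2, h.1⟩

lemma Bi.trans {C : Type w} [LinearOrder C] {D : Type x} [LinearOrder D] {E : Type y}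
    [LinearOrder E] (h : Bi C D) (h' : Bi D E) : Bi C E := by
  obtain ⟨⟨f, hf⟩, g, hg⟩ := h
  obtain ⟨⟨f', hf'⟩, g', hg'⟩ := h'
  exact ⟨⟨_, hf'.comp hf⟩, _, hg.comp hg'⟩

lemma Bi.of_orderIso {C : Type w} [LinearOrder C] {D : Type x} [LinearOrder D] (e : C ≃o D) :
    Bi C D := ⟨⟨e, e.strictMono⟩, e.symm, e.symm.strictMono⟩

lemma Bi.dual {C : Type w} [LinearOrder C] {D : Type x} [LinearOrder D] (h : Bi C D) :
    Bi Cᵒᵈ Dᵒᵈ := by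
  obtain ⟨⟨f, hf⟩, g, hg⟩ := h
  exact ⟨⟨_, hf.dual⟩, _, hg.dual⟩

lemma Codable.of_bi {C : Type w} [LinearOrder C] {D : Type x} [LinearOrder D] (hC : Codable C)
    (h : Bi C D) : Codable D := by
  obtain ⟨Λ, ι, hΛ, hι, dec, hdec⟩ := hC
  obtain ⟨⟨f, hf⟩, g, hg⟩ := h
  refine ⟨Λ, ι, hΛ, hι, fun lam s => f (dec lam s), fun W => ?_⟩
  obtain ⟨u, hu, hux⟩ := hdec W
  refine ⟨_, hf.comp (hu.comp hg), fun x => ?_⟩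
  obtain ⟨lam, s, h⟩ := hux (g x)
  exact ⟨lam, s, congrArg f h⟩

lemma Codable.dual {C : Type w} [LinearOrder C] (hC : Codable C) : Codable Cᵒᵈ := by
  obtain ⟨Λ, ι, hΛ, hι, dec, hdec⟩ := hC
  refine ⟨Λ, ι, hΛ, hι, fun lam s => OrderDual.toDual (dec lam s), fun W => ?_⟩
  obtain ⟨u, hu, hux⟩ := hdec W
  refine ⟨_, hu.dual, fun x => ?_⟩
  obtain ⟨lam, s, h⟩ := hux (OrderDual.ofDual x)
  exact ⟨lam, s, congrArg OrderDual.toDual h⟩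

lemma Codable.of_subsingleton {C : Type w} [LinearOrder C] [Subsingleton C] : Codable C := by
  rcases isEmpty_or_nonempty C with h | ⟨⟨a⟩⟩
  · exact ⟨Empty, Empty, inferInstance, inferInstance, fun e => e.elim,
      fun W => ⟨id, strictMono_id, fun x => h.elim x⟩⟩
  · exact ⟨Unit, Empty, inferInstance, inferInstance, fun _ _ => a,
      fun W => ⟨id, strictMono_id, fun x => ⟨(), fun e => e.elim, Subsingleton.elim _ _⟩⟩⟩

/-! ### Non-scattered chains -/

lemma lt_cases {α : Type*} [LinearOrder α] (s t : List α) (h : s < t) :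
    (∃ c r, t = s ++ c :: r) ∨
      ∃ p a b r r', a < b ∧ s = p ++ a :: r ∧ t = p ++ b :: r' := by
  induction s generalizing t with
  | nil =>
    cases t with
    | nil => exact absurd h (lt_irrefl _)
    | cons c r => exact Or.inl ⟨c, r, rfl⟩
  | cons a s ih =>
    cases t with
    | nil => exact absurd h (List.not_lt_nil _)
    | cons b t =>
      rw [List.cons_lt_cons_iff] at h
      rcases h with h | ⟨rfl, h⟩
      · exact Or.inr ⟨[], a, b, s, t, h, rfl, rfl⟩
      · rcases ih t h with ⟨c, r, rfl⟩ | ⟨p, a', b, r, r', hab, rfl, rfl⟩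
        · exact Or.inl ⟨c, r, rfl⟩
        · exact Or.inr ⟨a :: p, a', b, r, r', hab, rfl, rfl⟩

lemma lt_append_cons {α : Type*} [LinearOrder α] (s : List α) (c : α) (r : List α) :
    s < s ++ c :: r := by
  induction s with
  | nil => exact List.nil_lt_cons _ _
  | cons a s ih => exact List.cons_lt_cons_iff.2 (Or.inr ⟨rfl, ih⟩)

lemma append_cons_lt {α : Type*} [LinearOrder α] (p : List α) {a b : α} (r r' : List α)
    (h : a < b) : p ++ a :: r < p ++ b :: r' := by
  induction p with
  | nil => exact List.cons_lt_cons_iff.2 (Or.inl h)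
  | cons c p ih => exact List.cons_lt_cons_iff.2 (Or.inr ⟨rfl, ih⟩)

lemma act_strictMono (W : ℕ → List ℕ) {α : Type*} [LinearOrder α] :
    StrictMono (act W : List α → List α) := by
  intro s t h
  rcases lt_cases s t h with ⟨c, r, rfl⟩ | ⟨p, a, b, r, r', hab, rfl, rfl⟩
  · obtain ⟨e, he⟩ := act_append_cons W s c r
    rw [he]; exact lt_append_cons _ _ _
  · obtain ⟨e, he⟩ := act_append_cons W p a r
    obtain ⟨e', he'⟩ := act_append_cons W p b r'
    rw [he, he']; exact append_cons_lt _ _ _ hab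

lemma codable_list : Codable (List (Fin 3)) :=
  ⟨Unit, Unit, inferInstance, inferInstance, fun _ s => s (),
    fun W => ⟨act W, act_strictMono W, fun x => ⟨(), fun _ => x, rfl⟩⟩⟩

lemma dense_aux (s t : List (Fin 3)) (hs : ∀ a ∈ s, a ≠ 1) (ht : ∀ a ∈ t, a ≠ 1)
    (h : s ++ [1] < t ++ [1]) :
    ∃ r : List (Fin 3), (∀ a ∈ r, a ≠ 1) ∧ s ++ [1] < r ++ [1] ∧ r ++ [1] < t ++ [1] := by
  induction s generalizing t with
  | nil =>
    cases t with
    | nil => exact absurd h (lt_irrefl _)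
    | cons b t =>
      have hb : b = 2 := by
        have h1 := ht b (by simp)
        simp only [List.nil_append, List.cons_append, List.cons_lt_cons_iff] at h
        rcases h with h | ⟨h, -⟩
        · omega
        · exact absurd h.symm h1
      subst hb
      refine ⟨2 :: t ++ [0], ?_, ?_, ?_⟩
      · intro a ha
        rw [List.mem_append] at ha
        rcases ha with ha | ha
        · exact ht a ha
        · rw [List.mem_singleton] at ha; subst ha; decide
      · exact List.cons_lt_cons_iff.2 (Or.inl (by decide))
      · rw [List.append_assoc]
        exact append_cons_lt _ _ _ (by decide)
  | cons a s ih =>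
    have key : ∃ r : List (Fin 3), (∀ a ∈ r, a ≠ 1) ∧ a :: s ++ [1] < r ++ [1] ∧
        ∃ r', r = a :: r' := by
      refine ⟨a :: s ++ [2], ?_, ?_, _, rfl⟩
      · intro b hb
        rw [List.mem_append] at hb
        rcases hb with hb | hb
        · exact hs b hb
        · rw [List.mem_singleton] at hb; subst hb; decide
      · rw [List.append_assoc (a :: s)]
        exact append_cons_lt _ _ _ (by decide)
    cases t with
    | nil =>
      obtain ⟨r, hr, hr1, r', rfl⟩ := key
      refine ⟨_, hr, hr1, ?_⟩
      simp only [List.nil_append, List.cons_append, List.cons_lt_cons_iff] at h ⊢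
      rcases h with h | ⟨h, -⟩
      · exact Or.inl h
      · exact absurd h (hs a (by simp))
    | cons b t =>
      simp only [List.cons_append, List.cons_lt_cons_iff] at h
      rcases h with h | ⟨rfl, h⟩
      · obtain ⟨r, hr, hr1, r', rfl⟩ := key
        exact ⟨_, hr, hr1, List.cons_lt_cons_iff.2 (Or.inl h)⟩
      · obtain ⟨r, hr, h1, h2⟩ := ih t (fun a ha => hs a (by simp [ha]))
          (fun a ha => ht a (by simp [ha])) h
        refine ⟨a :: r, ?_, List.cons_lt_cons_iff.2 (Or.inr ⟨rfl, h1⟩),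
          List.cons_lt_cons_iff.2 (Or.inr ⟨rfl, h2⟩)⟩
        intro b hb
        rcases List.mem_cons.1 hb with rfl | hb
        · exact hs _ (by simp)
        · exact hr b hb

/-- The words `t1` with `t` a word over `{0, 2}` form a dense chain. -/
lemma exists_rat_to_list : ∃ f : ℚ → List (Fin 3), StrictMono f := by
  let D := {l : List (Fin 3) // ∃ t, (∀ a ∈ t, a ≠ 1) ∧ l = t ++ [1]}
  have : DenselyOrdered D := by
    refine ⟨?_⟩
    rintro ⟨_, s, hs, rfl⟩ ⟨_, t, ht, rfl⟩ h
    obtain ⟨r, hr, h1, h2⟩ := dense_aux s t hs ht h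
    exact ⟨⟨_, r, hr, rfl⟩, h1, h2⟩
  have : Nontrivial D := by
    refine ⟨⟨[1], [], by simp, rfl⟩, ⟨[0, 1], [0], by decide, rfl⟩, ?_⟩
    intro h
    exact absurd (congrArg Subtype.val h) (by decide)
  obtain ⟨e⟩ := Order.embedding_from_countable_to_dense (α := ℚ) (β := D)
  exact ⟨fun q => (e q).1, fun a b h => e.strictMono h⟩

lemma codable_of_not_scattered {S : Type w} [LinearOrder S] [Countable S] (h : ¬ Scattered S) :
    Codable S := by
  rw [Scattered, not_isEmpty_iff] at h
  obtain ⟨e⟩ := h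
  obtain ⟨f, hf⟩ := exists_rat_to_list
  obtain ⟨g⟩ := Order.embedding_from_countable_to_dense (α := S) (β := ℚ)
  obtain ⟨i⟩ := Order.embedding_from_countable_to_dense (α := List (Fin 3)) (β := ℚ)
  exact codable_list.of_bi ⟨⟨_, e.strictMono.comp i.strictMono⟩, _, hf.comp g.strictMono⟩

/-! ### Gluing along monotone maps -/

lemma glue {C : Type w} [LinearOrder C] {E : Type x} [LinearOrder E] {I : Type y} [LinearOrder I]
    {c : C → I} (hc : Monotone c) (φ : ∀ i, {x // c x = i} → E) (hφ : ∀ i, StrictMono (φ i))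
    (hlt : ∀ i j, i < j → ∀ x y, φ i x < φ j y) : StrictMono fun x => φ (c x) ⟨x, rfl⟩ := by
  intro x y hxy
  have key : ∀ i (hx : c x = i) (hy : c y = i), φ i ⟨x, hx⟩ < φ i ⟨y, hy⟩ :=
    fun i hx hy => hφ i hxy
  rcases (hc hxy.le).lt_or_eq with h | h
  · exact hlt _ _ h _ _
  · have h2 : ∀ j (hj : c y = j), φ (c x) ⟨x, rfl⟩ < φ j ⟨y, hj⟩ := by
      intro j hj
      obtain rfl : c x = j := h.trans hj
      exact key _ rfl hj
    exact h2 _ rfl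

/-- A chain whose blocks embed in infinitely many blocks of an `ω`-sum embeds in this sum. -/
lemma omega_embedding {C : Type w} [LinearOrder C] {E : Type x} [LinearOrder E] {h : C → ℕ}
    {e : E → ℕ} (hh : Monotone h) (he : Monotone e)
    (hf : ∀ m, ∃ᶠ k in atTop, ∃ f : {x // h x = m} → {y // e y = k}, StrictMono f) :
    ∃ f : C → E, StrictMono f := by
  obtain ⟨k, hk, hkf⟩ := extraction_forall_of_frequently hf
  choose f hf using hkf
  refine ⟨_, glue hh (fun m x => (f m x).1) (fun m x y hxy => hf m hxy) ?_⟩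
  intro i j hij x y
  refine he.reflect_lt ?_
  rw [(f i x).2, (f j y).2]
  exact hk hij

lemma Codable.finite_sum {C : Type w} [LinearOrder C] {g : C → ℕ} (hg : Monotone g) {k : ℕ}
    (hk : ∀ x, g x ≤ k) (hC : ∀ m, Codable {x // g x = m}) : Codable C := by
  choose Λ ι hΛ hι dec hdec using hC
  refine ⟨Σ m : Fin (k + 1), Λ m, Σ m : Fin (k + 1), ι m, inferInstance, inferInstance,
    fun p s => (dec p.1 p.2 fun i => s ⟨p.1, i⟩).1, fun W => ?_⟩
  choose f hf hfx using fun m => hdec m W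
  refine ⟨_, glue hg (fun m x => (f m x).1) (fun m x y hxy => hf m hxy) ?_, ?_⟩
  · intro i j hij x y
    refine hg.reflect_lt ?_
    rw [(f i x).2, (f j y).2]
    exact hij
  · intro x
    obtain ⟨lam, s, h⟩ := hfx (g x) ⟨x, rfl⟩
    let m : Fin (k + 1) := ⟨g x, Nat.lt_succ_of_le (hk x)⟩
    let s' : ∀ m : Fin (k + 1), ι m → List (Fin 3) := Function.update (fun _ _ => []) m s
    refine ⟨⟨m, lam⟩, fun p => s' p.1 p.2, ?_⟩
    have hs : s' m = s := Function.update_self _ _ _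
    simp only [hs]
    rw [h]

lemma length_le_act (W : ℕ → List ℕ) {α : Type*} (l : List α) : l.length ≤ (act W l).length := by
  induction l using List.reverseRecOn with
  | nil => simp
  | append_singleton l a ih => rw [act_snoc]; simp; omega

instance sumOrder {ι κ : Type} (D : ι → Type w) (M : κ → Type w) [iD : ∀ i, LinearOrder (D i)]
    [iM : ∀ i, LinearOrder (M i)] : ∀ i : ι ⊕ κ, LinearOrder (Sum.elim D M i)
  | Sum.inl i => iD i
  | Sum.inr i => iM i

section Families

variable {ι : Type} (D : ι → Type w) [∀ i, LinearOrder (D i)]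

/-- The chain `C` is an `ω`-sum of chains whose types, up to bi-embeddability, are among the `D j`
with `j ∈ T`, and every `j ∈ T` occurs infinitely often. -/
def OmS (T : Set ι) (C : Type w) [LinearOrder C] : Prop :=
  ∃ (h : C → ℕ) (b : ℕ → ι), Monotone h ∧ (∀ m, b m ∈ T) ∧
    (∀ j ∈ T, ∃ᶠ m in atTop, b m = j) ∧ ∀ m j, b m = j → Bi {x // h x = m} (D j)

/-- The chain `C` is a finite sum of chains, each of which is bi-embeddable with some `D i`. As
the blocks are indexed by all natural numbers, this is only of use if some `D i` is empty. -/
def DF (C : Type w) [LinearOrder C] : Prop :=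
  ∃ g : C → ℕ, Monotone g ∧ (∃ k, ∀ x, g x ≤ k) ∧ ∀ m, ∃ i, Bi {x // g x = m} (D i)

variable {D}

lemma OmS.embedding {T : Set ι} {C E : Type w} [LinearOrder C] [LinearOrder E] (hC : OmS D T C)
    (hE : OmS D T E) : ∃ f : C → E, StrictMono f := by
  obtain ⟨h, b, hh, hb, -, hB⟩ := hC
  obtain ⟨e, b', he, -, hb', hB'⟩ := hE
  refine omega_embedding hh he fun m => (hb' (b m) (hb m)).mono fun k hk => ?_
  exact ((hB m _ rfl).trans (hB' k _ hk).symm).1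

lemma OmS.bi {T : Set ι} {C E : Type w} [LinearOrder C] [LinearOrder E] (hC : OmS D T C)
    (hE : OmS D T E) : Bi C E := ⟨hC.embedding hE, hE.embedding hC⟩

/-- The blocks of the `ω`-sum are coded by their type `j ∈ T` and by the length of an additional
word, which tells how many blocks of type `j` precede. -/
lemma OmS.codable [Finite ι] (hD : ∀ i, Codable (D i)) {T : Set ι} {C : Type w} [LinearOrder C]
    (hC : OmS D T C) : Codable C := by
  classical
  obtain ⟨h, b, hh, hb, hbT, hB⟩ := hC
  choose Λ κ hΛ hκ dec hdec using hD
  let q : T → ℕ → ℕ := fun j => Nat.nth fun m => b m = j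
  have hinf : ∀ j : T, {m | b m = j}.Infinite := fun j =>
    Nat.frequently_atTop_iff_infinite.1 (hbT j j.2)
  have hqb : ∀ j n, b (q j n) = j := fun j n => Nat.nth_mem_of_infinite (hinf j) n
  have hqm : ∀ j, StrictMono (q j) := fun j => Nat.nth_strictMono (hinf j)
  choose d hd using fun (j : T) (n : ℕ) => (hB (q j n) j (hqb j n)).2
  choose u hu using fun m => (hB m (b m) rfl).1
  refine ⟨Σ j : T, Λ j, Option (Σ j : T, κ j), inferInstance, inferInstance,
    fun p s => (d p.1 (s none).length (dec p.1 p.2 fun i => s (some ⟨p.1, i⟩))).1, fun W => ?_⟩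
  choose f hf hfx using fun i => hdec i W
  obtain ⟨k, hk, hkt⟩ := extraction_forall_of_frequently
    (P := fun m k => ∃ t : List (Fin 3), q ⟨b m, hb m⟩ (act W t).length = k) (by
      intro m
      rw [frequently_atTop]
      intro N
      refine ⟨_, ?_, List.replicate N 0, rfl⟩
      have h1 := length_le_act W (List.replicate N (0 : Fin 3))
      rw [List.length_replicate] at h1
      exact h1.trans (hqm _).le_apply)
  choose t ht using hkt
  refine ⟨_, glue hh
    (fun m x => (d ⟨b m, hb m⟩ (act W (t m)).length (f (b m) (u m x))).1) ?_ ?_, ?_⟩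
  · intro m x y hxy
    exact hd _ _ (hf _ (hu _ hxy))
  · intro i j hij x y
    refine hh.reflect_lt ?_
    rw [(d _ _ _).2, (d _ _ _).2, ht, ht]
    exact hk hij
  · intro x
    obtain ⟨lam, s, hs⟩ := hfx (b (h x)) (u (h x) ⟨x, rfl⟩)
    let j : T := ⟨b (h x), hb (h x)⟩
    let s' : ∀ j : T, κ j → List (Fin 3) := Function.update (fun _ _ => []) j s
    refine ⟨⟨j, lam⟩, fun o => o.elim (t (h x)) fun p => s' p.1 p.2, ?_⟩
    have hs' : s' j = s := Function.update_self _ _ _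
    simp only [Option.elim_none, Option.elim_some, hs']
    rw [hs]

lemma DF.codable (hD : ∀ i, Codable (D i)) {C : Type w} [LinearOrder C] (hC : DF D C) :
    Codable C := by
  obtain ⟨g, hg, ⟨k, hk⟩, hB⟩ := hC
  refine Codable.finite_sum hg hk fun m => ?_
  obtain ⟨i, hi⟩ := hB m
  exact (hD i).of_bi hi.symm

lemma DF.mono {ι' : Type} {D' : ι' → Type w} [∀ i, LinearOrder (D' i)]
    (hD : ∀ i, ∃ i', Bi (D i) (D' i')) {C : Type w} [LinearOrder C] (hC : DF D C) : DF D' C := by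
  obtain ⟨g, hg, hk, hB⟩ := hC
  refine ⟨g, hg, hk, fun m => ?_⟩
  obtain ⟨i, hi⟩ := hB m
  obtain ⟨i', hi'⟩ := hD i
  exact ⟨i', hi.trans hi'⟩

lemma DF.of_orderIso {C E : Type w} [LinearOrder C] [LinearOrder E] (hC : DF D C) (e : C ≃o E) :
    DF D E := by
  obtain ⟨g, hg, ⟨k, hk⟩, hB⟩ := hC
  refine ⟨fun x => g (e.symm x), hg.comp e.symm.monotone, ⟨k, fun x => hk _⟩, fun m => ?_⟩
  obtain ⟨i, hi⟩ := hB m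
  exact ⟨i, Bi.trans ⟨⟨fun x => ⟨e.symm x.1, x.2⟩, fun x y h => e.symm.strictMono h⟩,
    ⟨fun x => ⟨e x.1, by simpa using x.2⟩, fun x y h => e.strictMono h⟩⟩ hi⟩

lemma bi_of_isEmpty {C : Type w} [LinearOrder C] {E : Type x} [LinearOrder E] (hC : IsEmpty C)
    (hE : IsEmpty E) : Bi C E :=
  ⟨⟨fun x => hC.elim x, fun x => hC.elim x⟩, ⟨fun x => hE.elim x, fun x => hE.elim x⟩⟩

lemma bi_of_iff {C : Type w} [LinearOrder C] {p q : C → Prop} (h : ∀ x, p x ↔ q x) :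
    Bi {x // p x} {x // q x} :=
  ⟨⟨fun x => ⟨x.1, (h _).1 x.2⟩, fun _ _ h => h⟩, ⟨fun x => ⟨x.1, (h _).2 x.2⟩, fun _ _ h => h⟩⟩

lemma DF.of_isEmpty {o : ι} (ho : IsEmpty (D o)) {C : Type w} [LinearOrder C] (hC : IsEmpty C) :
    DF D C :=
  ⟨fun _ => 0, fun x => hC.elim x, ⟨0, fun _ => le_rfl⟩, fun _ =>
    ⟨o, bi_of_isEmpty ⟨fun x => hC.elim x.1⟩ ho⟩⟩

lemma DF.dual {o : ι} (ho : IsEmpty (D o)) {C : Type w} [LinearOrder C] (hC : DF D C) :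
    DF (fun i => (D i)ᵒᵈ) Cᵒᵈ := by
  obtain ⟨g, hg, ⟨k, hk⟩, hB⟩ := hC
  refine ⟨fun x => k - g (OrderDual.ofDual x), fun x y hxy => Nat.sub_le_sub_left (hg hxy) k, ⟨k, fun x => Nat.sub_le _ _⟩, fun m => ?_⟩
  by_cases hm : m ≤ k
  · obtain ⟨i, hi⟩ := hB (k - m)
    refine ⟨i, Bi.trans ?_ hi.dual⟩
    refine ⟨⟨fun x => OrderDual.toDual ⟨OrderDual.ofDual x.1, ?_⟩, fun x y h => h⟩,
      ⟨fun x => ⟨OrderDual.toDual (OrderDual.ofDual x).1, ?_⟩, fun x y h => h⟩⟩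
    · have h1 := x.2; have h2 := hk (OrderDual.ofDual x.1); simp only at h1; omega
    · have := (OrderDual.ofDual x).2
      simp only [OrderDual.ofDual_toDual]
      omega
  · refine ⟨o, bi_of_isEmpty ⟨fun x => ?_⟩ ⟨fun x => ho.elim (OrderDual.ofDual x)⟩⟩
    have h1 := x.2
    simp only at h1
    omega

/-- An `ω`-sum of finite sums is an `ω`-sum. -/
lemma flatten {C : Type w} [LinearOrder C] {c : C → ℕ} (hc : Monotone c)
    (hC : ∀ i, DF D {x // c x = i}) :
    ∃ (h : C → ℕ) (b : ℕ → ι), Monotone h ∧ (∀ q, Bi {x // h x = q} (D (b q))) ∧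
      ((∃ k, ∀ x, c x ≤ k) → ∃ k, ∀ x, h x ≤ k) := by
  choose g hg hk hB using hC
  choose k hk using hk
  choose a hB using hB
  let K : ℕ → ℕ := fun i => ∑ j ∈ Finset.range i, (k j + 1)
  have hK : ∀ i, K (i + 1) = K i + (k i + 1) := fun i => Finset.sum_range_succ _ _
  have hKm : StrictMono K := strictMono_nat_of_lt_succ fun i => by rw [hK]; omega
  have hex : ∀ q, ∃ i, K i ≤ q ∧ q < K (i + 1) := by
    intro q
    induction q with
    | zero => exact ⟨0, le_of_eq rfl, by rw [hK]; omega⟩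
    | succ q ih =>
      obtain ⟨i, h1, h2⟩ := ih
      by_cases h : q + 1 < K (i + 1)
      · exact ⟨i, by omega, h⟩
      · exact ⟨i + 1, by omega, by rw [hK (i + 1)]; omega⟩
  choose r hr1 hr2 using hex
  let h : C → ℕ := fun x => K (c x) + g (c x) ⟨x, rfl⟩
  have hlt : ∀ x, h x < K (c x + 1) := fun x => by
    have := hk (c x) ⟨x, rfl⟩
    rw [hK]; simp only [h]; omega
  have hr : ∀ x q, h x = q → c x = r q := by
    intro x q hq
    have h1 : K (c x) < K (r q + 1) := lt_of_le_of_lt (by rw [← hq]; exact Nat.le_add_right _ _)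
      (hr2 q)
    have h2 : K (r q) < K (c x + 1) := lt_of_le_of_lt (hr1 q) (hq ▸ hlt x)
    rw [hKm.lt_iff_lt] at h1 h2
    omega
  have hval : ∀ x i (hi : c x = i), h x = K i + g i ⟨x, hi⟩ := by
    rintro x _ rfl; rfl
  refine ⟨h, fun q => a (r q) (q - K (r q)), fun x y hxy => ?_, fun q => ?_, ?_⟩
  · rcases (hc hxy).lt_or_eq with h1 | h1
    · exact (hlt x).le.trans ((hKm.monotone h1).trans (Nat.le_add_right _ _))
    · rw [hval x _ h1, hval y _ rfl]
      exact Nat.add_le_add_left (hg _ hxy) _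
  · refine Bi.trans ?_ (hB (r q) (q - K (r q)))
    refine ⟨⟨fun x => ⟨⟨x.1, hr x.1 q x.2⟩, ?_⟩, fun x y h => h⟩,
      ⟨fun x => ⟨x.1.1, ?_⟩, fun x y h => h⟩⟩
    · have := hval x.1 _ (hr x.1 q x.2)
      have := x.2
      omega
    · have h1 := hval x.1.1 _ x.1.2
      have h2 := x.2
      have h3 := hr1 q
      simp only [Subtype.coe_eta] at h1
      omega
  · rintro ⟨B, hB⟩
    exact ⟨K (B + 1), fun x =>
      (hlt x).le.trans (hKm.monotone (Nat.succ_le_succ (hB x)))⟩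

/-- A finite family of codable chains can be enlarged such that every `ω`-sum of finite sums of
members of the old family is a finite sum of members of the new one: up to a finite initial
segment, the `ω`-sum is determined, up to bi-embeddability, by the set of the types that occur in
it infinitely often. -/
lemma omega_step [Finite ι] {o : ι} (ho : IsEmpty (D o)) (hD : ∀ i, Codable (D i)) :
    ∃ (ι' : Type) (_ : Finite ι') (D' : ι' → Type w) (_ : ∀ i, LinearOrder (D' i)),
      (∀ i, Codable (D' i)) ∧ (∀ i, ∃ i', Bi (D i) (D' i')) ∧
      ∀ (C : Type w) [LinearOrder C] (c : C → ℕ), Monotone c → (∀ i, DF D {x // c x = i}) →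
        DF D' C := by
  classical
  have hM : ∀ T : Set ι, ∃ (M : Type w) (_ : LinearOrder M), Codable M ∧
      ∀ (C : Type w) [LinearOrder C], OmS D T C → Bi C M := by
    intro T
    by_cases h : ∃ (M : Type w) (_ : LinearOrder M), OmS D T M
    · obtain ⟨M, i, hM⟩ := h
      exact ⟨M, i, hM.codable hD, fun C _ hC => hC.bi hM⟩
    · exact ⟨PEmpty, inferInstance, Codable.of_subsingleton, fun C i hC => absurd ⟨C, i, hC⟩ h⟩
  choose M iM hMc hMb using hM
  refine ⟨ι ⊕ Set ι, inferInstance, Sum.elim D M, inferInstance, ?_, fun i => ⟨Sum.inl i, Bi.refl _⟩, ?_⟩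
  · rintro (i | T)
    · exact hD i
    · exact hMc T
  intro C _ c hc hC
  obtain ⟨h, b, hh, hb, -⟩ := flatten hc hC
  let T : Set ι := {j | ∃ᶠ m in atTop, b m = j}
  obtain ⟨N, hN⟩ : ∃ N, ∀ m ≥ N, b m ∈ T := by
    have h1 : ∀ᶠ m in atTop, ∀ j, j ∉ T → b m ≠ j := by
      rw [eventually_all]
      intro j
      by_cases hj : j ∈ T
      · exact Eventually.of_forall fun m h => absurd hj h
      · exact (not_frequently.1 hj).mono fun m hm _ => hm
    obtain ⟨N, hN⟩ := eventually_atTop.1 h1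
    exact ⟨N, fun m hm => by_contra fun h2 => hN m hm _ h2 rfl⟩
  have hT : OmS D T {x // min (h x) N = N} := by
    refine ⟨fun x => h x.1 - N, fun m => b (m + N), fun x y hxy =>
      Nat.sub_le_sub_right (hh hxy) N, fun m => hN _ (Nat.le_add_left _ _), fun j hj => ?_, ?_⟩
    · rw [frequently_atTop]
      intro m
      obtain ⟨k, hk, hkj⟩ := frequently_atTop.1 hj (m + N)
      exact ⟨k - N, by omega, by
        simp only; rw [Nat.sub_add_cancel (by omega)]; exact hkj⟩
    · rintro m _ rfl
      refine Bi.trans ?_ (hb (m + N))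
      refine ⟨⟨fun x => ⟨x.1.1, ?_⟩, fun x y h => h⟩,
        ⟨fun x => ⟨⟨x.1, ?_⟩, ?_⟩, fun x y h => h⟩⟩
      · have h1 := x.1.2; have h2 := x.2; simp only at h2; omega
      · have h2 := x.2; omega
      · have := x.2; simp only; omega
  refine ⟨fun x => min (h x) N,
    fun x y hxy => min_le_min_right N (hh hxy), ⟨N, fun x => min_le_right _ _⟩, fun m => ?_⟩
  rcases lt_trichotomy m N with hm | rfl | hm
  · exact ⟨Sum.inl (b m), (bi_of_iff fun x => by simp only; omega).trans (hb m)⟩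
  · exact ⟨Sum.inr T, hMb T _ hT⟩
  · exact ⟨Sum.inl o, bi_of_isEmpty ⟨fun x => by have h2 := x.2; simp only at h2; omega⟩ ho⟩

end Families

/-! ### Scattered chains of finite Hausdorff rank -/

/-- Up to bi-embeddability, the chains of Hausdorff rank at most `n` are the finite sums of members
of a finite family of codable chains. -/
lemma exists_family (n : ℕ) :
    ∃ (ι : Type) (_ : Finite ι) (D : ι → Type w) (_ : ∀ i, LinearOrder (D i)),
      (∀ i, Codable (D i)) ∧ (∃ o, IsEmpty (D o)) ∧
      ∀ m ≤ n, ∀ (C : Type w) [LinearOrder C], InHausdorff m C → DF D C := by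
  induction n with
  | zero =>
    refine ⟨Unit ⊕ Unit, inferInstance,
      Sum.elim (fun _ => PEmpty.{w + 1}) (fun _ => PUnit.{w + 1}), inferInstance, ?_,
      ⟨Sum.inl (), inferInstanceAs (IsEmpty PEmpty)⟩, ?_⟩
    · rintro (i | i)
      · exact Codable.of_subsingleton (C := PEmpty)
      · exact Codable.of_subsingleton (C := PUnit)
    · intro m hm C _ hC
      obtain rfl : m = 0 := by omega
      rw [InHausdorff] at hC
      refine ⟨fun _ => 0, monotone_const, ⟨0, fun _ => le_rfl⟩, fun m => ?_⟩
      rcases isEmpty_or_nonempty {x : C // 0 = m} with h | ⟨⟨a⟩⟩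
      · exact ⟨Sum.inl (), bi_of_isEmpty h (inferInstanceAs (IsEmpty PEmpty))⟩
      · have hs : ∀ x y : {x : C // 0 = m}, ¬ x < y := fun x y h =>
          h.ne (Subtype.ext (hC.elim _ _))
        exact ⟨Sum.inr (), ⟨fun _ => PUnit.unit, fun x y h => absurd h (hs x y)⟩,
          ⟨fun _ => a, fun x y h => absurd h (lt_irrefl PUnit.unit.{w + 1})⟩⟩
  | succ n ih =>
    obtain ⟨ι, _, D, _, hD, ⟨o, ho⟩, hH⟩ := ih
    obtain ⟨ι₁, _, D₁, _, hD₁, hDD₁, hO₁⟩ := omega_step ho hD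
    have ho' : IsEmpty (D o)ᵒᵈ := ⟨fun x => ho.elim (OrderDual.ofDual x)⟩
    obtain ⟨ι₂, _, D₂, _, hD₂, hDD₂, hO₂⟩ :=
      omega_step (D := fun i => (D i)ᵒᵈ) (o := o) ho' fun i => (hD i).dual
    obtain ⟨o₁, ho₁⟩ := hDD₁ o
    have ho₁ : IsEmpty (D₁ o₁) := ⟨fun x => ho.elim (ho₁.2.choose x)⟩
    obtain ⟨o₂, ho₂⟩ := hDD₂ o
    have ho₂ : IsEmpty (D₂ o₂) := ⟨fun x => ho'.elim (ho₂.2.choose x)⟩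
    have hoE : IsEmpty (Sum.elim D₁ (fun i => (D₂ i)ᵒᵈ) (Sum.inl o₁)) := ho₁
    have h1E : ∀ i, ∃ j, Bi (D₁ i) (Sum.elim D₁ (fun i => (D₂ i)ᵒᵈ) j) := fun i =>
      ⟨Sum.inl i, Bi.refl _⟩
    have h2E : ∀ i, ∃ j, Bi (D₂ i)ᵒᵈ (Sum.elim D₁ (fun i => (D₂ i)ᵒᵈ) j) := fun i =>
      ⟨Sum.inr i, Bi.refl _⟩
    refine ⟨ι₁ ⊕ ι₂, inferInstance, Sum.elim D₁ fun i => (D₂ i)ᵒᵈ, inferInstance, ?_,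
      ⟨Sum.inl o₁, hoE⟩, ?_⟩
    · rintro (i | i)
      · exact hD₁ i
      · exact (hD₂ i).dual
    intro m hm C _ hC
    rcases hm.lt_or_eq with hm | rfl
    · exact ((hH m (by omega) C hC).mono hDD₁).mono h1E
    rw [InHausdorff] at hC
    obtain ⟨c, hc, hcH⟩ := hC
    have hfib : ∀ i, DF D {x : C // c x = i} := by
      intro i
      obtain ⟨m, hm, h⟩ := hcH i
      exact hH m hm _ h
    -- the chain is an `ω*`-sum (negative indices) followed by an `ω`-sum (nonnegative indices)
    let p : C → ℕ := fun x => if c x < 0 then 0 else 1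
    have hp : Monotone p := by
      intro x y hxy
      have := hc hxy
      simp only [p]
      split_ifs <;> omega
    have hp0 : ∀ x, p x = 0 ↔ c x < 0 := fun x => by simp only [p]; split_ifs <;> simp_all
    have hp1 : ∀ x, p x = 1 ↔ 0 ≤ c x := fun x => by simp only [p]; split_ifs <;> simp_all
    have hpE : ∀ i, DF (Sum.elim D₁ fun i => (D₂ i)ᵒᵈ) {x // p x = i} := by
      intro i
      match i with
      | 0 =>
        have hneg : DF D₂ {x // p x = 0}ᵒᵈ := by
          refine hO₂ _ (fun x => (-1 - c (OrderDual.ofDual x).1).toNat) (fun x y hxy => ?_)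
            fun i => ?_
          · have : c (OrderDual.ofDual y).1 ≤ c (OrderDual.ofDual x).1 := hc hxy
            change (_ : ℤ).toNat ≤ (_ : ℤ).toNat
            omega
          · refine ((hfib (-1 - i)).dual ho).of_orderIso
              ⟨⟨fun x => ⟨OrderDual.toDual ⟨(OrderDual.ofDual x).1, ?_⟩, ?_⟩,
                fun x => OrderDual.toDual ⟨(OrderDual.ofDual x.1).1, ?_⟩,
                fun _ => rfl, fun _ => rfl⟩, Iff.rfl⟩
            · have := (OrderDual.ofDual x).2
              rw [hp0]; omega
            · have := (OrderDual.ofDual x).2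
              simp only [OrderDual.ofDual_toDual]; omega
            · have h1 := x.2
              have h2 := (hp0 _).1 (OrderDual.ofDual x.1).2
              omega
        exact ((hneg.dual ho₂).mono h2E).of_orderIso (OrderIso.dualDual _).symm
      | 1 =>
        refine DF.mono h1E (hO₁ _ (fun x => (c x.1).toNat) (fun x y hxy => ?_) fun i => ?_)
        · have : c x.1 ≤ c y.1 := hc hxy
          change (_ : ℤ).toNat ≤ (_ : ℤ).toNat
          omega
        · refine (hfib i).of_orderIso
            ⟨⟨fun x => ⟨⟨x.1, ?_⟩, ?_⟩, fun x => ⟨x.1.1, ?_⟩, fun _ => rfl, fun _ => rfl⟩, Iff.rfl⟩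
          · have := x.2
            rw [hp1]; omega
          · have := x.2
            simp only; omega
          · have h1 := x.2
            have h2 := (hp1 _).1 x.1.2
            omega
      | i + 2 =>
        refine DF.of_isEmpty (o := Sum.inl o₁) hoE ⟨fun x => ?_⟩
        have := x.2
        simp only [p] at this
        split_ifs at this <;> omega
    obtain ⟨h, b, hh, hb, hbd⟩ := flatten hp hpE
    exact ⟨h, hh, hbd ⟨1, fun x => by simp only [p]; split_ifs <;> omega⟩, fun q => ⟨b q, hb q⟩⟩

lemma codable_of_inHausdorff {n : ℕ} {C : Type w} [LinearOrder C] (hC : InHausdorff n C) :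
    Codable C := by
  obtain ⟨ι, _, D, _, hD, -, hH⟩ := exists_family.{w} n
  exact (hH n le_rfl C hC).codable hD

/-! ### Chainable structures -/

/-- Strictly increasing maps preserve and reflect quantifier-free formulas, hence are embeddings of every
structure chained by the order. -/
lemma exists_embedding {L : FirstOrder.Language.{u, v}} [L.IsRelational] {S : Type w}
    [L.Structure S] [LinearOrder S] (hchain : ChainedBy L S) {f : S → S} (hf : StrictMono f) :
    ∃ g : S ↪[L] S, ∀ x, g x = f x := by
  let e : Language.order.Embedding S S :=
    { toFun := f
      inj' := hf.injective
      map_fun' := fun F => isEmptyElim F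
      map_rel' := fun {n} r v => by
        cases r
        exact hf.lt_iff_lt }
  refine ⟨⟨⟨f, hf.injective⟩, fun {n} F => isEmptyElim F, fun {n} R v => ?_⟩, fun x => rfl⟩
  obtain ⟨φ, hφ, h⟩ := hchain n R
  rw [h, h]
  have := hφ.realize_embedding e (v := v) (xs := default)
  rw [Language.Formula.Realize, Language.Formula.Realize, ← this]
  rw [Subsingleton.elim (⇑e ∘ (default : Fin 0 → S)) default]
  rfl

theorem bigRamsey_of_codable {L : FirstOrder.Language.{u, v}} [L.IsRelational] {S : Type w}
    [L.Structure S] [LinearOrder S] (hchain : ChainedBy L S) (hS : Codable S) (F : L.Substructure S)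
    [Finite F] : ∃ t : ℕ, StructBigRamseyDegLE L F S t := by
  classical
  obtain ⟨t, ht⟩ := hS.bigRamsey (Nat.card F)
  refine ⟨t, fun k χ => ?_⟩
  let q : F ≃ Fin (Nat.card F) := Finite.equivFin F
  let χ' : (Fin (Nat.card F) → S) → Fin k := fun v =>
    if h : ∃ g : F ↪[L] S, ∀ x, g x = v (q x) then χ h.choose else χ F.subtype
  have hχ : ∀ g : F ↪[L] S, χ' (fun i => g (q.symm i)) = χ g := by
    intro g
    have h : ∃ g' : F ↪[L] S, ∀ x, g' x = g (q.symm (q x)) := ⟨g, fun x => by simp⟩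
    simp only [χ', dif_pos h]
    congr 1
    ext x
    rw [h.choose_spec]
    simp
  obtain ⟨f, hf, hft⟩ := ht k χ'
  obtain ⟨g, hg⟩ := exists_embedding hchain hf
  refine ⟨g, (Set.ncard_le_ncard ?_ (Set.toFinite _)).trans hft⟩
  rintro _ ⟨a, rfl⟩
  refine ⟨fun i => a (q.symm i), ?_⟩
  have h : (f ∘ fun i => a (q.symm i)) = fun i => (g.comp a) (q.symm i) := by
    funext i
    simp [hg]
  simp only [h, hχ]

end ChainRamsey

/-- A countably infinite structure over a relational language which is chainable by a
linear order that is either non-scattered or scattered of finite Hausdorff rank has finite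
big Ramsey degrees: every finite (nonempty) substructure has finite big Ramsey degree in it. -/
theorem chainable_finite_bigRamsey_degrees
    (L : FirstOrder.Language.{u, v}) [L.IsRelational]
    (S : Type w) [L.Structure S] [Countable S] [Infinite S]
    (instO : LinearOrder S)
    (hchain : @ChainedBy L S _ instO)
    (hgood : ¬ @Scattered S instO ∨
      (@Scattered S instO ∧ ∃ n : ℕ, @InHausdorff n S instO)) :
    ∀ n : ℕ, 1 ≤ n → ∀ F : L.Substructure S, Nat.card F = n →
      ∃ t : ℕ, StructBigRamseyDegLE L F S t := by
  intro n hn F hF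
  have : Finite F := Nat.finite_of_card_ne_zero (by omega)
  refine ChainRamsey.bigRamsey_of_codable hchain ?_ F
  rcases hgood with h | ⟨-, m, h⟩
  · exact ChainRamsey.codable_of_not_scattered h
  · exact ChainRamsey.codable_of_inHausdorff h
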